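/- A Jordan algebra J over a field K of characteristic zero admits a nondegenerate symmetric associative bilinear form (i.e., J is pseudo-euclidean) if and only if its adjoint and coadjoint representations are equivalent, that is, if and only if there exists a linear isomorphism φ : J → J* (J* the dual space) such that φ(x·y)(z) = φ(y)(x·z) for all x, y, z ∈ J. -/

import Mathlib

/-- A finite-dimensional vector space carries a nondegenerate symmetric bilinear form. -/
theorem exists_symm_nondegenerate_form (K V : Type*) [Field K] [AddCommGroup V] [Module K V]
    [FiniteDimensional K V] :
    ∃ D : V →ₗ[K] V →ₗ[K] K, (∀ x y, D x y = D y x) ∧ ∀ x, (∀ y, D x y = 0) → x = 0 := by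
  let e := Module.finBasis K V
  refine ⟨e.toDual, fun x y => ?_, fun x hx => e.toDual_injective ?_⟩
  · have h : e.toDual = e.toDual.flip := e.ext fun i => e.ext fun j => by
      simp [Module.Basis.toDual_apply, eq_comm]
    exact LinearMap.congr_fun₂ h x y
  · rw [map_zero]
    exact LinearMap.ext hx

/-- A nondegenerate bilinear form `b` can be replaced by a nondegenerate symmetric one without
changing its values on vectors `x` satisfying `b x y = b y x` for all `y`. -/
theorem exists_symm_nondegenerate_form_eq_on {K V : Type*} [Field K] [CharZero K]
    [AddCommGroup V] [Module K V] [FiniteDimensional K V] (b : V →ₗ[K] V →ₗ[K] K)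
    (hb : ∀ x, (∀ y, b x y = 0) → x = 0) :
    ∃ s : V →ₗ[K] V →ₗ[K] K, (∀ x y, s x y = s y x) ∧ (∀ x, (∀ y, s x y = 0) → x = 0) ∧
      ∀ x, (∀ y, b x y = b y x) → ∀ y, s x y = b x y := by
  let c : V →ₗ[K] V →ₗ[K] K := (2⁻¹ : K) • (b + b.flip)
  have hc : ∀ x y, c x y = 2⁻¹ * (b x y + b y x) := fun x y => by simp [c, mul_add]
  let R := LinearMap.ker c
  let W := LinearMap.ker (b - b.flip)
  have hW : ∀ x, x ∈ W ↔ ∀ y, b x y = b y x := fun x => by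
    simp [W, LinearMap.ext_iff, sub_eq_zero]
  have hcb : ∀ x ∈ W, ∀ y, c x y = b x y := fun x hx y => by
    rw [hc, ← (hW x).1 hx y]; ring
  have hdisj : Disjoint W R := Submodule.disjoint_def.2 fun x hxW hxR => hb x fun y => by
    rw [← hcb x hxW y, LinearMap.mem_ker.1 hxR, LinearMap.zero_apply]
  obtain ⟨C, hWC, hCR⟩ := hdisj.exists_isCompl
  let p := R.projectionOnto C hCR.symm
  have hp : ∀ r : R, p r = r := Submodule.projectionOnto_apply_left hCR.symm
  obtain ⟨D, hDsymm, hD⟩ := exists_symm_nondegenerate_form K R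
  have hs : ∀ x y, (c + D.compl₁₂ p p) x y = c x y + D (p x) (p y) := fun x y => rfl
  have hcsymm : ∀ x y, c x y = c y x := fun x y => by rw [hc, hc, add_comm]
  refine ⟨c + D.compl₁₂ p p, fun x y => ?_, fun x hx => ?_, fun x hx y => ?_⟩
  · rw [hs, hs, hcsymm, hDsymm]
  · have hpx : p x = 0 := hD _ fun r => by
      have h := hx r
      rwa [hs, hcsymm, LinearMap.mem_ker.1 r.2, LinearMap.zero_apply, zero_add, hp] at h
    have hxR : x ∈ R := LinearMap.mem_ker.2 <| LinearMap.ext fun y => by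
      simpa [hs, hpx] using hx y
    exact congr_arg Subtype.val ((hp ⟨x, hxR⟩).symm.trans hpx)
  · have hxW := (hW x).2 hx
    have hpx : p x = 0 := (Submodule.projectionOnto_apply_eq_zero_iff hCR.symm).2 (hWC hxW)
    rw [hs, hpx, map_zero, LinearMap.zero_apply, add_zero, hcb x hxW]

/-- A Jordan algebra `J` over a field `K` of characteristic zero admits a
nondegenerate symmetric associative bilinear form (i.e. `J` is pseudo-euclidean) if and
only if its adjoint and coadjoint representations are equivalent, i.e. iff there is a
linear isomorphism `φ : J ≃ J*` with `φ (x*y) z = φ y (x*z)` for all `x y z`. -/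
theorem pseudoEuclidean_iff_adjoint_equiv_coadjoint
    {K : Type*} [Field K] [CharZero K]
    {J : Type*} [NonUnitalNonAssocCommRing J] [Module K J]
    [SMulCommClass K J J] [IsScalarTower K J J] [FiniteDimensional K J]
    (hjordan : ∀ x y : J, (x * y) * (x * x) = x * (y * (x * x))) :
    (∃ B : J →ₗ[K] J →ₗ[K] K,
        (∀ x y : J, B x y = B y x) ∧
        (∀ x : J, (∀ y : J, B x y = 0) → x = 0) ∧
        (∀ x y z : J, B (x * y) z = B x (y * z))) ↔
      (∃ φ : J ≃ₗ[K] Module.Dual K J, ∀ x y z : J, φ (x * y) z = φ y (x * z)) := by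
  constructor
  · rintro ⟨B, -, hB, hassoc⟩
    have hinj : Function.Injective B :=
      (injective_iff_map_eq_zero B).2 fun x hx => hB x fun y => by simp [hx]
    refine ⟨LinearMap.linearEquivOfInjective B hinj Subspace.dual_finrank_eq.symm,
      fun x y z => ?_⟩
    rw [LinearMap.linearEquivOfInjective_apply, LinearMap.linearEquivOfInjective_apply,
      mul_comm, hassoc]
  · rintro ⟨φ, hφ⟩
    have hmul : ∀ x y z : J, φ (x * y) z = φ z (x * y) := fun x y z => by
      rw [hφ x y z, mul_comm x z, ← hφ z y x, mul_comm z y, hφ y z x, mul_comm y x]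
    obtain ⟨s, hsymm, hnd, hs⟩ := exists_symm_nondegenerate_form_eq_on φ.toLinearMap
      fun x hx => φ.map_eq_zero_iff.1 (LinearMap.ext hx)
    have hs_mul : ∀ x y z : J, s (x * y) z = φ (x * y) z := fun x y z => hs _ (hmul x y) z
    refine ⟨s, hsymm, hnd, fun x y z => ?_⟩
    rw [hsymm x, hs_mul, hs_mul, hφ y z x, mul_comm y x, hmul]
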